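/- arXiv:1111.0120 — 2 statements merged into one kernel-verified Lean document; each statement's English description precedes it below -/
import Mathlib

section
/- Let U ⊆ ℝ be an open set, V : ℝ → ℂ differentiable on U, and λ₁, λ ∈ ℂ. Let ψ₁ : ℝ → ℂ be three times differentiable on U, nonvanishing on U, with ψ₁''(x) = (V(x) − λ₁)·ψ₁(x) on U, and let ψ : ℝ → ℂ be three times differentiable on U with ψ''(x) = (V(x) − λ)·ψ(x) on U. Define V₊(x) = V(x) − 2·(d/dx)(ψ₁'/ψ₁)(x) and Ψ⁺(x) = ψ'(x) − (ψ₁'(x)/ψ₁(x))·ψ(x). Then −Ψ⁺''(x) + V₊(x)·Ψ⁺(x) = λ·Ψ⁺(x) for all x ∈ U. -/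
/-!
Writing `s = ψ₁' / ψ₁`, the equation for `ψ₁` becomes the Riccati equation `s' + s² = V - λ₁`.
It factors `H - λ₁ = A† A` with `A = d/dx - s` and `A† = -d/dx - s`, while the reversed product
is `A A† = H₊ - λ₁`. Hence `Ψ⁺ = A ψ` satisfies `A† Ψ⁺ = (λ - λ₁) ψ`, and applying `A` once more
gives `(H₊ - λ₁) Ψ⁺ = (λ - λ₁) Ψ⁺`.
-/

open Filter Topology

section Darboux

variable {𝕜 : Type*} [NontriviallyNormedField 𝕜] {U : Set 𝕜} {x : 𝕜}

section Riccati

variable {𝔸 : Type*} [NormedCommRing 𝔸] [NormedAlgebra 𝕜 𝔸] {V s ψ : 𝕜 → 𝔸} {lam₁ lam : 𝔸}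

/-- Twice differentiable solutions on `U` of the stationary Schrödinger equation
`-ψ'' + V ψ = lam ψ`, encoded as `ψ'' = (V - lam) ψ`. -/
structure IsSchrodingerSolutionOn (V : 𝕜 → 𝔸) (lam : 𝔸) (ψ : 𝕜 → 𝔸) (U : Set 𝕜) : Prop where
  differentiableAt : ∀ x ∈ U, DifferentiableAt 𝕜 ψ x
  hasDerivAt_deriv : ∀ x ∈ U, HasDerivAt (deriv ψ) ((V x - lam) * ψ x) x

/-- The Darboux transform `ψ' - s ψ` of `ψ`. It is parametrized by the superpotential `s`; the
transform built from a nonvanishing solution `φ` is the case `s = logDeriv φ`. -/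
noncomputable def darbouxTransform (s ψ : 𝕜 → 𝔸) (x : 𝕜) : 𝔸 :=
  deriv ψ x - s x * ψ x

/-- The potential `V - 2 s'` of the partner operator under the Darboux transformation with
superpotential `s`. -/
noncomputable def darbouxPotential (V s : 𝕜 → 𝔸) (x : 𝕜) : 𝔸 :=
  V x - 2 * deriv s x

theorem IsSchrodingerSolutionOn.neg_deriv_deriv_add (hψ : IsSchrodingerSolutionOn V lam ψ U)
    (hx : x ∈ U) : -deriv (deriv ψ) x + V x * ψ x = lam * ψ x := by
  rw [(hψ.hasDerivAt_deriv x hx).deriv]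
  ring

theorem hasDerivAt_darbouxTransform (hs : HasDerivAt s (V x - lam₁ - s x ^ 2) x)
    (hψ : DifferentiableAt 𝕜 ψ x) (hψ' : HasDerivAt (deriv ψ) ((V x - lam) * ψ x) x) :
    HasDerivAt (darbouxTransform s ψ) ((lam₁ - lam) * ψ x - s x * darbouxTransform s ψ x) x := by
  refine (hψ'.sub (hs.mul hψ.hasDerivAt)).congr_deriv ?_
  rw [darbouxTransform]
  ring

theorem IsSchrodingerSolutionOn.darbouxTransform_of_riccati (hU : IsOpen U)
    (hs : ∀ x ∈ U, HasDerivAt s (V x - lam₁ - s x ^ 2) x)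
    (hψ : IsSchrodingerSolutionOn V lam ψ U) :
    IsSchrodingerSolutionOn (darbouxPotential V s) lam (darbouxTransform s ψ) U := by
  have hasDerivAt_transform : ∀ x ∈ U, HasDerivAt (darbouxTransform s ψ)
      ((lam₁ - lam) * ψ x - s x * darbouxTransform s ψ x) x := fun x hx ↦
    hasDerivAt_darbouxTransform (hs x hx) (hψ.differentiableAt x hx) (hψ.hasDerivAt_deriv x hx)
  refine ⟨fun x hx ↦ (hasDerivAt_transform x hx).differentiableAt, fun x hx ↦ ?_⟩
  have deriv_eventuallyEq : deriv (darbouxTransform s ψ) =ᶠ[𝓝 x]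
      fun y ↦ (lam₁ - lam) * ψ y - s y * darbouxTransform s ψ y :=
    eventually_of_mem (hU.mem_nhds hx) fun y hy ↦ (hasDerivAt_transform y hy).deriv
  have hasDerivAt_rhs := ((hψ.differentiableAt x hx).hasDerivAt.const_mul (lam₁ - lam)).fun_sub
    ((hs x hx).fun_mul (hasDerivAt_transform x hx))
  refine (hasDerivAt_rhs.congr_of_eventuallyEq deriv_eventuallyEq).congr_deriv ?_
  rw [darbouxPotential, (hs x hx).deriv, darbouxTransform]
  ring

end Riccati

variable {F : Type*} [NontriviallyNormedField F] [NormedAlgebra 𝕜 F] {V φ ψ : 𝕜 → F} {lam₁ lam : F}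

theorem hasDerivAt_logDeriv (hφ : DifferentiableAt 𝕜 φ x) (hφ' : DifferentiableAt 𝕜 (deriv φ) x)
    (hne : φ x ≠ 0) :
    HasDerivAt (logDeriv φ) (deriv (deriv φ) x / φ x - logDeriv φ x ^ 2) x := by
  refine (hφ'.hasDerivAt.div hφ.hasDerivAt hne).congr_deriv ?_
  rw [logDeriv_apply]
  field_simp

theorem IsSchrodingerSolutionOn.riccati_logDeriv (hφ : IsSchrodingerSolutionOn V lam₁ φ U)
    (hx : x ∈ U) (hne : φ x ≠ 0) :
    HasDerivAt (logDeriv φ) (V x - lam₁ - logDeriv φ x ^ 2) x := by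
  have hφ' := hφ.hasDerivAt_deriv x hx
  have hs := hasDerivAt_logDeriv (hφ.differentiableAt x hx) hφ'.differentiableAt hne
  rwa [hφ'.deriv, mul_div_cancel_right₀ _ hne] at hs

theorem darboux_transform_of_general_solution_general (hU : IsOpen U)
    (hφ : IsSchrodingerSolutionOn V lam₁ φ U) (hne : ∀ x ∈ U, φ x ≠ 0)
    (hψ : IsSchrodingerSolutionOn V lam ψ U) :
    IsSchrodingerSolutionOn (darbouxPotential V (logDeriv φ)) lam
      (darbouxTransform (logDeriv φ) ψ) U :=
  hψ.darbouxTransform_of_riccati hU fun x hx ↦ hφ.riccati_logDeriv hx (hne x hx)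

end Darboux

/-- Theorem 2.10(ii): the Darboux transformation sends a solution ψ of Hψ = λψ to
Ψ⁺ = ψ' − (ψ₁'/ψ₁)·ψ, which is a solution of the partner equation
−Ψ⁺'' + V₊·Ψ⁺ = λ·Ψ⁺ with V₊ = V − 2·(ψ₁'/ψ₁)'. -/
theorem darboux_transform_of_general_solution
    (U : Set ℝ) (hU : IsOpen U) (V : ℝ → ℂ) (lam₁ lam : ℂ) (ψ₁ ψ : ℝ → ℂ)
    (hV : ∀ x ∈ U, DifferentiableAt ℝ V x)
    (hψ₁d1 : ∀ x ∈ U, DifferentiableAt ℝ ψ₁ x)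
    (hψ₁d2 : ∀ x ∈ U, DifferentiableAt ℝ (deriv ψ₁) x)
    (hψ₁d3 : ∀ x ∈ U, DifferentiableAt ℝ (deriv (deriv ψ₁)) x)
    (hne : ∀ x ∈ U, ψ₁ x ≠ 0)
    (heq₁ : ∀ x ∈ U, deriv (deriv ψ₁) x = (V x - lam₁) * ψ₁ x)
    (hψd1 : ∀ x ∈ U, DifferentiableAt ℝ ψ x)
    (hψd2 : ∀ x ∈ U, DifferentiableAt ℝ (deriv ψ) x)
    (hψd3 : ∀ x ∈ U, DifferentiableAt ℝ (deriv (deriv ψ)) x)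
    (heq : ∀ x ∈ U, deriv (deriv ψ) x = (V x - lam) * ψ x)
    (Vplus : ℝ → ℂ) (Ψplus : ℝ → ℂ)
    (hVplus : ∀ x ∈ U, Vplus x = V x - 2 * deriv (fun t => deriv ψ₁ t / ψ₁ t) x)
    (hΨplus : ∀ x, Ψplus x = deriv ψ x - (deriv ψ₁ x / ψ₁ x) * ψ x) :
    ∀ x ∈ U, -(deriv (deriv Ψplus) x) + Vplus x * Ψplus x = lam * Ψplus x := by
  intro x hx
  obtain rfl : Ψplus = darbouxTransform (logDeriv ψ₁) ψ := funext hΨplus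
  rw [hVplus x hx]
  exact (darboux_transform_of_general_solution_general hU
    ⟨hψ₁d1, fun y hy ↦ heq₁ y hy ▸ (hψ₁d2 y hy).hasDerivAt⟩ hne
    ⟨hψd1, fun y hy ↦ heq y hy ▸ (hψd2 y hy).hasDerivAt⟩).neg_deriv_deriv_add hx
end

section
/- Let P, Q ∈ ℝ[x,y] and consider the planar polynomial vector field X = P·∂/∂x + Q·∂/∂y. Suppose f₁, …, f_p ∈ ℝ[x,y] are polynomials with cofactors K₁, …, K_p ∈ ℝ[x,y], i.e. P·∂f_i/∂x + Q·∂f_i/∂y = K_i·f_i identically, and suppose g₁, h₁, …, g_q, h_q ∈ ℝ[x,y] are polynomials with cofactors L₁, …, L_q ∈ ℝ[x,y] in the sense that h_j·(P·∂g_j/∂x + Q·∂g_j/∂y) − g_j·(P·∂h_j/∂x + Q·∂h_j/∂y) = L_j·h_j² identically. Let λ₁, …, λ_p, μ₁, …, μ_q ∈ ℝ satisfy Σᵢ λ_i·K_i + Σⱼ μ_j·L_j + (∂P/∂x + ∂Q/∂y) = 0 as polynomials. Then on any open set Ω ⊆ ℝ² on which every f_i is strictly positive and every h_j is nonvanishing,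 the function R(x,y) = ∏ᵢ f_i(x,y)^{λ_i} · ∏ⱼ exp(μ_j·g_j(x,y)/h_j(x,y)) (real powers) satisfies ∂(R·P)/∂x + ∂(R·Q)/∂y = 0 on Ω, i.e. R is an integrating factor of X on Ω. -/
open MvPolynomial

/-!
On a region where every `f i` is positive, the cofactor equations say that the logarithmic
derivative of `R = ∏ (f i) ^ λ i * ∏ exp (μ j * e j)`, with `e j = g j / h j`, along the vector
field `V` is `∑ λ i * K i + ∑ μ j * L j = -div V`. Hence
`div (R V) = R * div V + V(R) = R * (div V - div V) = 0`.
-/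

section Divergence

variable {𝕜 : Type*} [NontriviallyNormedField 𝕜]

variable (𝕜) in
/-- The divergence of a vector field on a normed space, defined without coordinates as the trace
of its derivative. It is meant for finite-dimensional spaces and is `0` by convention where the
field is not differentiable. -/
noncomputable def divergence {E : Type*} [NormedAddCommGroup E] [NormedSpace 𝕜 E] (V : E → E)
    (z : E) : 𝕜 :=
  LinearMap.trace 𝕜 E (fderiv 𝕜 V z : E →ₗ[𝕜] E)

theorem divergence_smul {E : Type*} [NormedAddCommGroup E] [NormedSpace 𝕜 E]
    [FiniteDimensional 𝕜 E] {R : E → 𝕜} {V : E → E} {z : E}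
    (hR : DifferentiableAt 𝕜 R z) (hV : DifferentiableAt 𝕜 V z) :
    divergence 𝕜 (fun w ↦ R w • V w) z = R z * divergence 𝕜 V z + fderiv 𝕜 R z (V z) := by
  have trace_smulRight : LinearMap.trace 𝕜 E ((fderiv 𝕜 R z).smulRight (V z) : E →ₗ[𝕜] E)
      = fderiv 𝕜 R z (V z) :=
    LinearMap.trace_smulRight (fderiv 𝕜 R z : E →ₗ[𝕜] 𝕜) (V z)
  simp only [divergence, fderiv_fun_smul hR hV, ContinuousLinearMap.toLinearMap_add,
    ContinuousLinearMap.toLinearMap_smul, map_add, map_smul, smul_eq_mul, trace_smulRight]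

variable {σ : Type*} [Fintype σ] [DecidableEq σ] {V : (σ → 𝕜) → σ → 𝕜} {z : σ → 𝕜}

theorem divergence_eq_sum_fderiv_single (hV : DifferentiableAt 𝕜 V z) :
    divergence 𝕜 V z = ∑ k, fderiv 𝕜 (fun w ↦ V w k) z (Pi.single k 1) := by
  rw [divergence, LinearMap.trace_eq_matrix_trace 𝕜 (Pi.basisFun 𝕜 σ)]
  simp [Matrix.trace, fderiv_apply hV]

theorem divergence_eq_sum_deriv_update (hV : DifferentiableAt 𝕜 V z) :
    divergence 𝕜 V z = ∑ k, deriv (fun s ↦ V (Function.update z k s) k) (z k) := by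
  rw [divergence_eq_sum_fderiv_single hV]
  refine Finset.sum_congr rfl fun k _ ↦ ?_
  have hVk : DifferentiableAt 𝕜 (fun w ↦ V w k) (Function.update z k (z k)) := by
    simpa using differentiableAt_pi.mp hV k
  simpa [Function.comp_def] using
    (hVk.hasFDerivAt.comp_hasDerivAt (z k) (hasDerivAt_update z k (z k))).deriv.symm

end Divergence

section Calculus

variable {𝕜 : Type*} [NontriviallyNormedField 𝕜] {E : Type*} [NormedAddCommGroup E]
  [NormedSpace 𝕜 E] {z : E}

theorem hasFDerivAt_finsetProd_of_smul {ι : Type*} {S : Finset ι} {u : ι → E → 𝕜}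
    {d : ι → E →L[𝕜] 𝕜} (hu : ∀ i ∈ S, HasFDerivAt (u i) (u i z • d i) z) :
    HasFDerivAt (fun w ↦ ∏ i ∈ S, u i w) ((∏ i ∈ S, u i z) • ∑ i ∈ S, d i) z := by
  classical
  refine (HasFDerivAt.finsetProd hu).congr_fderiv ?_
  rw [Finset.smul_sum]
  refine Finset.sum_congr rfl fun i hi ↦ ?_
  rw [smul_smul, Finset.prod_erase_mul _ _ hi]

theorem hasFDerivAt_div {g h : E → 𝕜} {g' h' : E →L[𝕜] 𝕜} (hg : HasFDerivAt g g' z)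
    (hh : HasFDerivAt h h' z) (hz : h z ≠ 0) :
    HasFDerivAt (fun w ↦ g w / h w) ((h z ^ 2)⁻¹ • (h z • g' - g z • h')) z := by
  simp only [div_eq_mul_inv]
  refine (hg.mul ((hasDerivAt_inv hz).comp_hasFDerivAt z hh)).congr_fderiv ?_
  ext v
  simp only [add_apply, sub_apply, smul_apply, smul_eq_mul, Function.comp_apply]
  field_simp
  ring

end Calculus

section Darboux

variable {E : Type*} {ι κ : Type*} [Fintype ι] [Fintype κ]

/-- The Darboux function `∏ (f i) ^ lam i * ∏ exp (mu j * e j)` built from invariant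
hypersurfaces `f i = 0` and exponential factors `exp (e j)`. The powers are real powers, so it is
meant for use where every `f i` is positive. -/
noncomputable def darbouxFunction (f : ι → E → ℝ) (lam : ι → ℝ) (e : κ → E → ℝ) (mu : κ → ℝ)
    (z : E) : ℝ :=
  (∏ i, f i z ^ lam i) * ∏ j, Real.exp (mu j * e j z)

variable [NormedAddCommGroup E] [NormedSpace ℝ E] {f : ι → E → ℝ} {e : κ → E → ℝ}
  {lam : ι → ℝ} {mu : κ → ℝ} {z : E}

theorem hasFDerivAt_darbouxFunction {f' : ι → E →L[ℝ] ℝ} {e' : κ → E →L[ℝ] ℝ}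
    (hf : ∀ i, HasFDerivAt (f i) (f' i) z) (he : ∀ j, HasFDerivAt (e j) (e' j) z)
    (hpos : ∀ i, 0 < f i z) :
    HasFDerivAt (darbouxFunction f lam e mu)
      (darbouxFunction f lam e mu z •
        (∑ i, (lam i / f i z) • f' i + ∑ j, mu j • e' j)) z := by
  have power (i : ι) :
      HasFDerivAt (fun w ↦ f i w ^ lam i) (f i z ^ lam i • (lam i / f i z) • f' i) z := by
    refine ((hf i).rpow_const (Or.inl (hpos i).ne')).congr_fderiv ?_
    rw [Real.rpow_sub_one (hpos i).ne', smul_smul]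
    congr 1
    ring
  have exponential (j : κ) : HasFDerivAt (fun w ↦ Real.exp (mu j * e j w))
      (Real.exp (mu j * e j z) • mu j • e' j) z :=
    ((he j).const_mul (mu j)).exp
  refine ((hasFDerivAt_finsetProd_of_smul fun i _ ↦ power i).mul
    (hasFDerivAt_finsetProd_of_smul fun j _ ↦ exponential j)).congr_fderiv ?_
  rw [darbouxFunction]
  module

theorem fderiv_darbouxFunction_apply_of_cofactor {v : E} {K : ι → ℝ} {L : κ → ℝ}
    (hf : ∀ i, DifferentiableAt ℝ (f i) z) (he : ∀ j, DifferentiableAt ℝ (e j) z)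
    (hpos : ∀ i, 0 < f i z) (hK : ∀ i, fderiv ℝ (f i) z v = K i * f i z)
    (hL : ∀ j, fderiv ℝ (e j) z v = L j) :
    fderiv ℝ (darbouxFunction f lam e mu) z v =
      darbouxFunction f lam e mu z * (∑ i, lam i * K i + ∑ j, mu j * L j) := by
  have hlog (i : ι) : lam i / f i z * (K i * f i z) = lam i * K i := by
    field_simp [(hpos i).ne']
  rw [(hasFDerivAt_darbouxFunction (fun i ↦ (hf i).hasFDerivAt)
    (fun j ↦ (he j).hasFDerivAt) hpos).fderiv]
  simp [hK, hL, hlog, mul_add]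

theorem divergence_darbouxFunction_smul_eq_zero [FiniteDimensional ℝ E] {V : E → E}
    {K : ι → ℝ} {L : κ → ℝ} (hV : DifferentiableAt ℝ V z)
    (hf : ∀ i, DifferentiableAt ℝ (f i) z) (he : ∀ j, DifferentiableAt ℝ (e j) z)
    (hpos : ∀ i, 0 < f i z) (hK : ∀ i, fderiv ℝ (f i) z (V z) = K i * f i z)
    (hL : ∀ j, fderiv ℝ (e j) z (V z) = L j)
    (hsum : ∑ i, lam i * K i + ∑ j, mu j * L j + divergence ℝ V z = 0) :
    divergence ℝ (fun w ↦ darbouxFunction f lam e mu w • V w) z = 0 := by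
  have hR : DifferentiableAt ℝ (darbouxFunction f lam e mu) z :=
    (hasFDerivAt_darbouxFunction (fun i ↦ (hf i).hasFDerivAt)
      (fun j ↦ (he j).hasFDerivAt) hpos).differentiableAt
  rw [divergence_smul hR hV, fderiv_darbouxFunction_apply_of_cofactor hf he hpos hK hL]
  linear_combination darbouxFunction f lam e mu z * hsum

end Darboux

section Polynomial

variable {σ : Type*} [Fintype σ] {𝕜 : Type*} [NontriviallyNormedField 𝕜]

theorem hasFDerivAt_mvPolynomial_eval (p : MvPolynomial σ 𝕜) (z : σ → 𝕜) :
    HasFDerivAt (fun w ↦ eval w p)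
      (∑ k, eval z (pderiv k p) • (ContinuousLinearMap.proj k : (σ → 𝕜) →L[𝕜] 𝕜)) z := by
  classical
  induction p using MvPolynomial.induction_on with
  | C a =>
    simp only [eval_C]
    exact (hasFDerivAt_const a z).congr_fderiv (by ext v; simp)
  | add p q hp hq =>
    simp only [map_add]
    exact (hp.fun_add hq).congr_fderiv (by
      ext v
      simp [add_mul, Finset.sum_add_distrib])
  | mul_X p n hp =>
    simp only [map_mul, eval_X]
    refine (hp.mul (hasFDerivAt_apply n z)).congr_fderiv ?_
    ext v
    simp [Derivation.leibniz, pderiv_X, Pi.single_apply, add_mul, Finset.sum_add_distrib,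
      Finset.mul_sum, mul_assoc, apply_ite]

theorem fderiv_mvPolynomial_eval_apply (p : MvPolynomial σ 𝕜) (z v : σ → 𝕜) :
    fderiv 𝕜 (fun w ↦ eval w p) z v = ∑ k, v k * eval z (pderiv k p) := by
  simp [(hasFDerivAt_mvPolynomial_eval p z).fderiv, mul_comm]

theorem differentiable_mvPolynomial_eval {τ : Type*} [Finite τ] (p : MvPolynomial τ 𝕜) :
    Differentiable 𝕜 (fun w ↦ eval w p) := by
  have := Fintype.ofFinite τ
  exact fun z ↦ (hasFDerivAt_mvPolynomial_eval p z).differentiableAt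

theorem divergence_mvPolynomial_eval (P : σ → MvPolynomial σ 𝕜) (z : σ → 𝕜) :
    divergence 𝕜 (fun w k ↦ eval w (P k)) z = eval z (∑ k, pderiv k (P k)) := by
  classical
  have hP : DifferentiableAt 𝕜 (fun w k ↦ eval w (P k)) z :=
    differentiableAt_pi.mpr fun k ↦ differentiable_mvPolynomial_eval (P k) z
  simp [divergence_eq_sum_fderiv_single hP, fderiv_mvPolynomial_eval_apply, Pi.single_apply]

theorem fderiv_mvPolynomial_eval_apply_eq_cofactor {P : σ → MvPolynomial σ 𝕜}
    {f K : MvPolynomial σ 𝕜} (hf : ∑ k, P k * pderiv k f = K * f) (z : σ → 𝕜) :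
    fderiv 𝕜 (fun w ↦ eval w f) z (fun k ↦ eval z (P k)) = eval z K * eval z f := by
  simpa [fderiv_mvPolynomial_eval_apply] using congrArg (eval z) hf

theorem fderiv_mvPolynomial_eval_div_apply_eq_cofactor {P : σ → MvPolynomial σ 𝕜}
    {g h L : MvPolynomial σ 𝕜}
    (hg : h * ∑ k, P k * pderiv k g - g * ∑ k, P k * pderiv k h = L * h ^ 2)
    {z : σ → 𝕜} (hz : eval z h ≠ 0) :
    fderiv 𝕜 (fun w ↦ eval w g / eval w h) z (fun k ↦ eval z (P k)) = eval z L := by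
  have hgz := congrArg (eval z) hg
  simp only [map_sub, map_mul, map_sum, map_pow] at hgz
  have hquot := hasFDerivAt_div (differentiable_mvPolynomial_eval g z).hasFDerivAt
    (differentiable_mvPolynomial_eval h z).hasFDerivAt hz
  rw [hquot.fderiv]
  simp only [smul_apply, sub_apply, smul_eq_mul, fderiv_mvPolynomial_eval_apply, hgz]
  field_simp

theorem darboux_integrating_factor_general {ι κ : Type*} [Fintype ι] [Fintype κ]
    [DecidableEq σ] {P : σ → MvPolynomial σ ℝ} {f K : ι → MvPolynomial σ ℝ}
    {g h L : κ → MvPolynomial σ ℝ} {lam : ι → ℝ} {mu : κ → ℝ}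
    (hf : ∀ i, ∑ k, P k * pderiv k (f i) = K i * f i)
    (hg : ∀ j, h j * ∑ k, P k * pderiv k (g j) - g j * ∑ k, P k * pderiv k (h j)
      = L j * h j ^ 2)
    (hsum : ∑ i, C (lam i) * K i + ∑ j, C (mu j) * L j + ∑ k, pderiv k (P k) = 0)
    {z : σ → ℝ} (hpos : ∀ i, 0 < eval z (f i)) (hne : ∀ j, eval z (h j) ≠ 0)
    {R : (σ → ℝ) → ℝ}
    (hR : ∀ w, R w = (∏ i, eval w (f i) ^ lam i) *
      ∏ j, Real.exp (mu j * eval w (g j) / eval w (h j))) :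
    ∑ k, deriv (fun s ↦ R (Function.update z k s) * eval (Function.update z k s) (P k)) (z k)
      = 0 := by
  have hdiff (p : MvPolynomial σ ℝ) : DifferentiableAt ℝ (fun w ↦ eval w p) z :=
    differentiable_mvPolynomial_eval p z
  have hP : DifferentiableAt ℝ (fun w k ↦ eval w (P k)) z :=
    differentiableAt_pi.mpr fun k ↦ hdiff (P k)
  have he (j : κ) : DifferentiableAt ℝ (fun w ↦ eval w (g j) / eval w (h j)) z :=
    (hasFDerivAt_div (hdiff (g j)).hasFDerivAt (hdiff (h j)).hasFDerivAt
      (hne j)).differentiableAt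
  have hR_eq : R = darbouxFunction (fun i w ↦ eval w (f i)) lam
      (fun j w ↦ eval w (g j) / eval w (h j)) mu := by
    ext w
    simp only [hR, darbouxFunction, mul_div_assoc]
  have hRdiff : DifferentiableAt ℝ R z := hR_eq ▸ (hasFDerivAt_darbouxFunction
    (fun i ↦ (hdiff (f i)).hasFDerivAt) (fun j ↦ (he j).hasFDerivAt) hpos).differentiableAt
  have hdiv : divergence ℝ (fun w ↦ R w • fun k ↦ eval w (P k)) z = 0 := by
    subst hR_eq
    refine divergence_darbouxFunction_smul_eq_zero hP (fun i ↦ hdiff (f i)) he hpos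
      (fun i ↦ fderiv_mvPolynomial_eval_apply_eq_cofactor (hf i) z)
      (fun j ↦ fderiv_mvPolynomial_eval_div_apply_eq_cofactor (hg j) (hne j)) ?_
    simpa [divergence_mvPolynomial_eval] using congrArg (eval z) hsum
  simpa [divergence_eq_sum_deriv_update (hRdiff.fun_smul hP)] using hdiv

end Polynomial

section Plane

variable {α : Type*} (a b s : α)

theorem vec2_eta (w : Fin 2 → α) : ![w 0, w 1] = w :=
  FinVec.etaExpand_eq w

theorem update_vec2_zero : Function.update ![a, b] 0 s = ![s, b] := by
  ext i; fin_cases i <;> rfl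

theorem update_vec2_one : Function.update ![a, b] 1 s = ![a, s] := by
  ext i; fin_cases i <;> rfl

end Plane

/-- Theorem 2.14(b): the Darboux integrating-factor criterion. If the cofactors
satisfy Σ λ_i K_i + Σ μ_j L_j + (∂P/∂x + ∂Q/∂y) = 0, then
R = Π f_i^{λ_i} · Π exp(μ_j g_j / h_j) is an integrating factor of
X = P ∂/∂x + Q ∂/∂y, i.e. ∂(RP)/∂x + ∂(RQ)/∂y = 0, on any open set where the f_i
are positive and the h_j nonvanishing. -/
theorem darboux_integrating_factor
    (P Q : MvPolynomial (Fin 2) ℝ) (p q : ℕ)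
    (f K : Fin p → MvPolynomial (Fin 2) ℝ)
    (g h L : Fin q → MvPolynomial (Fin 2) ℝ)
    (hf : ∀ i, P * pderiv 0 (f i) + Q * pderiv 1 (f i) = K i * f i)
    (hg : ∀ j, h j * (P * pderiv 0 (g j) + Q * pderiv 1 (g j))
        - g j * (P * pderiv 0 (h j) + Q * pderiv 1 (h j)) = L j * (h j) ^ 2)
    (lam : Fin p → ℝ) (mu : Fin q → ℝ)
    (hsum : ∑ i, C (lam i) * K i + ∑ j, C (mu j) * L j
        + (pderiv 0 P + pderiv 1 Q) = 0)
    (Ω : Set (ℝ × ℝ)) (hΩ : IsOpen Ω)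
    (hpos : ∀ z ∈ Ω, ∀ i, 0 < eval ![z.1, z.2] (f i))
    (hhne : ∀ z ∈ Ω, ∀ j, eval ![z.1, z.2] (h j) ≠ 0)
    (R : ℝ → ℝ → ℝ)
    (hR : ∀ x y, R x y =
        (∏ i, (eval ![x, y] (f i)) ^ (lam i)) *
        ∏ j, Real.exp (mu j * eval ![x, y] (g j) / eval ![x, y] (h j))) :
    ∀ z ∈ Ω,
      deriv (fun s => R s z.2 * eval ![s, z.2] P) z.1
        + deriv (fun t => R z.1 t * eval ![z.1, t] Q) z.2 = 0 := by
  intro z hz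
  simpa [update_vec2_zero, update_vec2_one] using
    darboux_integrating_factor_general (P := ![P, Q]) (R := fun w ↦ R (w 0) (w 1))
      (by simpa using hf) (by simpa using hg) (by simpa using hsum) (hpos z hz) (hhne z hz)
      (fun w ↦ by simp only [hR, vec2_eta])
end
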